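/- arXiv:math/0402023 — 2 statements merged into one kernel-verified Lean document; each statement's English description precedes it below -/
import Mathlib

section
/- (Garside's Lemma 0) Let X, Y ∈ B_{n+1}^+ and let σ_i, σ_j be generators with σ_i X = σ_j Y in B_{n+1}^+. If i = j then X = Y. If |i − j| = 1 then there exists Z ∈ B_{n+1}^+ such that X = σ_j σ_i Z and Y = σ_i σ_j Z. If |i − j| ≥ 2 then there exists Z ∈ B_{n+1}^+ such that X = σ_j Z and Y = σ_i Z. -/
/-!
The braid monoid of the theorem sits inside the braid group, so besides Garside's combinatorial
argument one needs that the monoid `BraidMonoid n` with the positive braid presentation embeds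
in `BraidGroup n`.

*Garside's lemma in the presented monoid.* For generators `i, j` let `compl i j` be the word with
`σ_i * compl i j = σ_j * compl j i` the defining relation (and `compl i i = 1`). The claim is that
`σ_i x = σ_j y` forces `x = compl i j * z` and `y = compl j i * z` for some `z`
(`garside_monoid`). The relation between words given by this conclusion contains the defining
relations and is compatible with multiplication, so only transitivity is at stake; it follows,
by induction on the length, from the case analysis on three generators in `compl_trans`. In
particular the monoid is left cancellative.

*Embedding.* The half twist `Δ` is left divisible by every generator and conjugates `σ_i` to
`σ_{n-1-i}`, so `Δ²` is central. Localizing at the powers of `Δ²` makes every generator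
invertible, and left cancellativity makes the localization map injective. By the universal
property of the braid group, the localization map factors through `BraidGroup n`, so
`BraidMonoid n → BraidGroup n` is injective (`toBraidGroup_injective`). Its image is `braidPos n`,
and Garside's lemma transfers.
-/

/-- The braid relations for the braid group `B_{n+1}` on generators `σ_1, …, σ_n`
(indexed by `Fin n`, with `i : Fin n` representing `σ_{i+1}`). -/
def braidRels (n : ℕ) : Set (FreeGroup (Fin n)) :=
  {r | ∃ i j : Fin n,
    ((i.val + 1 < j.val ∨ j.val + 1 < i.val) ∧
      r = FreeGroup.of i * FreeGroup.of j * (FreeGroup.of j * FreeGroup.of i)⁻¹) ∨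
    ((i.val + 1 = j.val ∨ j.val + 1 = i.val) ∧
      r = FreeGroup.of i * FreeGroup.of j * FreeGroup.of i *
        (FreeGroup.of j * FreeGroup.of i * FreeGroup.of j)⁻¹)}

/-- The braid group `B_{n+1}` on `n + 1` strands, presented by generators and relations. -/
abbrev BraidGroup (n : ℕ) : Type := PresentedGroup (braidRels n)

/-- The generator `σ_{i+1}` of the braid group `B_{n+1}`. -/
def σgen (n : ℕ) (i : Fin n) : BraidGroup n := PresentedGroup.of i

/-- The positive braid monoid `B_{n+1}^+`: the submonoid generated by the `σ_i`. -/
def braidPos (n : ℕ) : Submonoid (BraidGroup n) :=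
  Submonoid.closure (Set.range (σgen n))

/-- A braid is quasipositive if it is a product of conjugates of generators. -/
def Quasipositive {n : ℕ} (b : BraidGroup n) : Prop :=
  ∃ (k : ℕ) (w : Fin k → BraidGroup n) (idx : Fin k → Fin n),
    b = (List.ofFn fun j => w j * σgen n (idx j) * (w j)⁻¹).prod

/-- The `k`-sequence relation `X →^k Y`: `X` reduces to `Y` by deleting `k` generators. -/
inductive KSeq (n : ℕ) : ℕ → BraidGroup n → BraidGroup n → Prop
  | zero (X : BraidGroup n) : KSeq n 0 X X
  | succ (k : ℕ) (u v Y : BraidGroup n) (i : Fin n)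
      (hu : u ∈ braidPos n) (hv : v ∈ braidPos n)
      (h : KSeq n k (u * v) Y) : KSeq n (k + 1) (u * σgen n i * v) Y

/-- The exponent-sum (algebraic length) homomorphism `B_{n+1} → ℤ`, sending each `σ_i` to `1`. -/
def expSum (n : ℕ) : BraidGroup n →* Multiplicative ℤ :=
  PresentedGroup.toGroup (f := fun _ : Fin n => Multiplicative.ofAdd (1 : ℤ)) (by
    rintro r ⟨i, j, ⟨-, rfl⟩ | ⟨-, rfl⟩⟩ <;> simp <;> group)

/-- The algebraic length of a braid: the image under the homomorphism sending `σ_i` to `1`.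
On positive braids, this is the length function `ℓ`. -/
def algLength {n : ℕ} (b : BraidGroup n) : ℤ := Multiplicative.toAdd (expSum n b)

/-- The Garside element `Δ = (σ_1 ⋯ σ_n)(σ_1 ⋯ σ_{n-1}) ⋯ (σ_1 σ_2) σ_1` of `B_{n+1}`. -/
def braidDelta (n : ℕ) : BraidGroup n :=
  ((List.finRange n).reverse.map fun m =>
    (((List.finRange n).filter fun i => i ≤ m).map (σgen n)).prod).prod
/-- `LDvd a b` : `a` left-divides `b` in the positive braid monoid, i.e. `b = a * c`
for some positive braid `c`. -/
def LDvd {n : ℕ} (a b : BraidGroup n) : Prop := ∃ c ∈ braidPos n, b = a * c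

/-- `RDvd a b` : `a` right-divides `b` in the positive braid monoid, i.e. `b = c * a`
for some positive braid `c`. -/
def RDvd {n : ℕ} (a b : BraidGroup n) : Prop := ∃ c ∈ braidPos n, b = c * a

/-! ### The presented monoid -/

namespace GarsideLemma

/-- The generators `i` and `j` are neighbours: `|i - j| = 1`. -/
def Nbr {n : ℕ} (i j : Fin n) : Prop := i.val + 1 = j.val ∨ j.val + 1 = i.val

instance {n : ℕ} (i j : Fin n) : Decidable (Nbr i j) := by unfold Nbr; infer_instance

/-- The right complement of `i` in `j`: the word `w` such that `σ_i w` is the least common right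
multiple of `σ_i` and `σ_j`. -/
def compl {n : ℕ} (i j : Fin n) : FreeMonoid (Fin n) :=
  if i = j then 1 else if Nbr i j then FreeMonoid.of j * FreeMonoid.of i else FreeMonoid.of j

/-- The positive braid relations, in the uniform shape `σ_i * compl i j = σ_j * compl j i`;
they are trivial for `i = j`. -/
def posRel (n : ℕ) (u v : FreeMonoid (Fin n)) : Prop :=
  ∃ i j, u = FreeMonoid.of i * compl i j ∧ v = FreeMonoid.of j * compl j i

/-- The monoid with the positive braid presentation. -/
abbrev BraidMonoid (n : ℕ) : Type := PresentedMonoid (posRel n)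

/-- The generators of the presented braid monoid. -/
def gen {n : ℕ} (i : Fin n) : BraidMonoid n := PresentedMonoid.of (posRel n) i

/-- The class of the complement word `compl i j` in the presented monoid. -/
def cm {n : ℕ} (i j : Fin n) : BraidMonoid n := PresentedMonoid.mk (posRel n) (compl i j)

variable {n : ℕ}

lemma cm_self (i : Fin n) : cm i i = 1 := by simp [cm, compl]

lemma nbr_ne {i j : Fin n} (h : Nbr i j) : i ≠ j := by
  rintro rfl; unfold Nbr at h; omega

lemma Nbr.symm {i j : Fin n} (h : Nbr i j) : Nbr j i := Or.symm h

lemma cm_nbr {i j : Fin n} (h : Nbr i j) : cm i j = gen j * gen i := by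
  simp [cm, compl, h, nbr_ne h, gen, PresentedMonoid.of]

lemma cm_far {i j : Fin n} (hne : i ≠ j) (h : ¬ Nbr i j) : cm i j = gen j := by
  simp [cm, compl, h, hne, gen, PresentedMonoid.of]

lemma gen_mul_cm (i j : Fin n) : gen i * cm i j = gen j * cm j i := by
  have := PresentedMonoid.mk_eq_mk_of_rel (rels := posRel n) ⟨i, j, rfl, rfl⟩
  rw [map_mul, map_mul] at this
  exact this

lemma gen_comm {i j : Fin n} (hne : i ≠ j) (h : ¬ Nbr i j) (z : BraidMonoid n) :
    gen i * (gen j * z) = gen j * (gen i * z) := by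
  have := gen_mul_cm i j
  rw [cm_far hne h, cm_far hne.symm (fun h' => h h'.symm)] at this
  rw [← mul_assoc, this, mul_assoc]

lemma gen_braid {i j : Fin n} (h : Nbr i j) (z : BraidMonoid n) :
    gen i * (gen j * (gen i * z)) = gen j * (gen i * (gen j * z)) := by
  have := gen_mul_cm i j
  rw [cm_nbr h, cm_nbr h.symm] at this
  simpa only [mul_assoc] using congrArg (· * z) this

lemma length_compl (i j : Fin n) : (compl i j).length = (compl j i).length := by
  unfold compl
  by_cases h : i = j
  · simp [h]
  · by_cases h' : Nbr i j
    · simp [h, Ne.symm h, h', h'.symm]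
    · have h'' : ¬ Nbr j i := fun e => h' e.symm
      simp [h, Ne.symm h, h', h'']

lemma length_eq_of_rel {u v : FreeMonoid (Fin n)} (h : ConGen.Rel (posRel n) u v) :
    u.length = v.length := by
  induction h with
  | of x y h =>
    obtain ⟨i, j, rfl, rfl⟩ := h
    simp [length_compl i j]
  | refl => rfl
  | symm _ ih => exact ih.symm
  | trans _ _ ih1 ih2 => exact ih1.trans ih2
  | mul _ _ ih1 ih2 => simp [ih1, ih2]

/-- The length of an element of the presented monoid; well defined as the relations are
homogeneous. -/
def len : BraidMonoid n → ℕ := Quotient.lift FreeMonoid.length fun _ _ h => length_eq_of_rel h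

lemma len_mk (u : FreeMonoid (Fin n)) : len (PresentedMonoid.mk (posRel n) u) = u.length := rfl

lemma len_gen_mul (i : Fin n) (x : BraidMonoid n) : len (gen i * x) = len x + 1 := by
  obtain ⟨a, rfl⟩ := PresentedMonoid.surjective_mk x
  rw [gen, PresentedMonoid.of, ← map_mul, len_mk, len_mk]
  simp [add_comm]

/-! ### Garside's lemma in the presented monoid -/

/-- Garside's lemma for `σ_i x = σ_j y` with `x` of length less than `L`: the inductive
hypothesis. -/
def GarsideBelow (n L : ℕ) : Prop :=
  ∀ (i j : Fin n) (x y : BraidMonoid n), len x < L → gen i * x = gen j * y →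
    ∃ z, x = cm i j * z ∧ y = cm j i * z

lemma GarsideBelow.cancel {L : ℕ} (H : GarsideBelow n L) {i : Fin n} {x y : BraidMonoid n}
    (hx : len x < L) (h : gen i * x = gen i * y) : x = y := by
  obtain ⟨z, rfl, rfl⟩ := H i i x y hx h
  rfl

lemma GarsideBelow.nbr {L : ℕ} (H : GarsideBelow n L) {i j : Fin n} {x y : BraidMonoid n}
    (hij : Nbr i j) (hx : len x < L) (h : gen i * x = gen j * y) :
    ∃ z, x = gen j * (gen i * z) ∧ y = gen i * (gen j * z) := by
  obtain ⟨z, h1, h2⟩ := H i j x y hx h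
  rw [cm_nbr hij, mul_assoc] at h1
  rw [cm_nbr hij.symm, mul_assoc] at h2
  exact ⟨z, h1, h2⟩

lemma GarsideBelow.far {L : ℕ} (H : GarsideBelow n L) {i j : Fin n} {x y : BraidMonoid n}
    (hne : i ≠ j) (hij : ¬ Nbr i j) (hx : len x < L) (h : gen i * x = gen j * y) :
    ∃ z, x = gen j * z ∧ y = gen i * z := by
  obtain ⟨z, h1, h2⟩ := H i j x y hx h
  rw [cm_far hne hij] at h1
  rw [cm_far hne.symm fun e => hij e.symm] at h2
  exact ⟨z, h1, h2⟩

/-- Transitivity through the middle generator `k`, when `i, k` are neighbours and `j` commutes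
with both. -/
lemma trans_one_nbr {L : ℕ} (H : GarsideBelow n L) {i j k : Fin n} {Z₁ Z₂ : BraidMonoid n}
    (hij : i ≠ j) (hjk : j ≠ k) (nij : ¬ Nbr i j) (nik : Nbr i k) (njk : ¬ Nbr j k)
    (h : gen i * (gen k * Z₁) = gen j * Z₂) (hL : len (gen i * (gen k * Z₁)) ≤ L) :
    ∃ Z, gen k * (gen i * Z₁) = gen j * Z ∧ gen k * Z₂ = gen i * Z := by
  simp only [len_gen_mul] at hL
  obtain ⟨Z', h1, rfl⟩ := H.far hij nij (by simp only [len_gen_mul]; omega) h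
  obtain ⟨Z, rfl, rfl⟩ := H.far hjk.symm (fun e => njk e.symm) (by omega) h1
  refine ⟨gen k * (gen i * Z), ?_, (gen_braid nik Z).symm⟩
  rw [gen_comm hij nij, gen_comm hjk.symm fun e => njk e.symm]

/-- Transitivity through the middle generator `k`, when `i` is a neighbour of both `j` and `k`,
and `j` commutes with `k`. -/
lemma trans_nbr_end {L : ℕ} (H : GarsideBelow n L) {i j k : Fin n} {Z₁ Z₂ : BraidMonoid n}
    (hjk : j ≠ k) (nij : Nbr i j) (nik : Nbr i k) (njk : ¬ Nbr j k)
    (h : gen i * (gen k * Z₁) = gen j * Z₂) (hL : len (gen i * (gen k * Z₁)) ≤ L) :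
    ∃ Z, gen k * (gen i * Z₁) = gen j * (gen i * Z) ∧ gen k * Z₂ = gen i * (gen j * Z) := by
  have nkj : ¬ Nbr k j := fun e => njk e.symm
  simp only [len_gen_mul] at hL
  obtain ⟨Z', h1, rfl⟩ := H.nbr nij (by simp only [len_gen_mul]; omega) h
  obtain ⟨A, rfl, h2⟩ := H.far hjk.symm nkj (by omega) h1
  have hlen : len Z' < L := by
    have e := congrArg len h1
    simp only [len_gen_mul] at e hL
    omega
  obtain ⟨B, rfl, rfl⟩ := H.nbr nik hlen h2
  refine ⟨gen k * (gen i * (gen j * B)), ?_, ?_⟩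
  · rw [gen_braid nij, gen_comm hjk.symm nkj, gen_comm hjk njk B, gen_braid nik.symm]
  · rw [gen_comm hjk njk, gen_braid nik.symm, gen_braid nij, gen_comm hjk.symm nkj]

/-- Transitivity through the middle generator `k`, when `k` is a neighbour of both `i` and `j`,
and `i` commutes with `j`. -/
lemma trans_nbr_mid {L : ℕ} (H : GarsideBelow n L) {i j k : Fin n} {Z₁ Z₂ : BraidMonoid n}
    (hij : i ≠ j) (nij : ¬ Nbr i j) (nik : Nbr i k) (njk : Nbr j k)
    (h : gen i * (gen k * Z₁) = gen j * (gen k * Z₂))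
    (hL : len (gen i * (gen k * Z₁)) ≤ L) :
    ∃ Z, gen k * (gen i * Z₁) = gen j * Z ∧ gen k * (gen j * Z₂) = gen i * Z := by
  have nji : ¬ Nbr j i := fun e => nij e.symm
  have e := congrArg len h
  simp only [len_gen_mul] at hL e
  obtain ⟨Z', h1, h2⟩ := H.far hij nij (by simp only [len_gen_mul]; omega) h
  obtain ⟨A, rfl, rfl⟩ := H.nbr njk.symm (by omega) h1
  obtain ⟨B, rfl, h3⟩ := H.nbr nik.symm (by omega) h2
  simp only [len_gen_mul] at hL
  have h4 := H.cancel (by simp only [len_gen_mul]; omega) h3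
  obtain ⟨C, rfl, rfl⟩ := H.far hij.symm nji (by omega) h4
  refine ⟨gen k * (gen i * (gen j * (gen k * C))), ?_, ?_⟩
  · rw [gen_comm hij nij, gen_braid nik, gen_braid njk.symm, gen_comm hij.symm nji]
  · rw [gen_comm hij.symm nji, gen_braid njk, gen_braid nik.symm]

/-- The conclusion of Garside's lemma is transitive: it passes from the pairs `(i, k)` and
`(k, j)` to the pair `(i, j)`. -/
lemma compl_trans {L : ℕ} (H : GarsideBelow n L) (i j k : Fin n) (Z₁ Z₂ : BraidMonoid n)
    (h : cm k i * Z₁ = cm k j * Z₂) (hL : len (cm k i * Z₁) ≤ L) :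
    ∃ Z, cm i k * Z₁ = cm i j * Z ∧ cm j k * Z₂ = cm j i * Z := by
  have hL' : len (cm k j * Z₂) ≤ L := h ▸ hL
  have sym : ∀ {a b : Fin n}, ¬ Nbr a b → ¬ Nbr b a := fun ha e => ha e.symm
  by_cases hik : i = k
  · subst hik
    rw [cm_self, one_mul] at h
    exact ⟨Z₂, by rw [cm_self, one_mul, h], rfl⟩
  by_cases hjk : j = k
  · subst hjk
    rw [cm_self, one_mul] at h
    exact ⟨Z₁, rfl, by rw [cm_self, one_mul, h]⟩
  by_cases hij : i = j
  · subst hij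
    have : Z₁ = Z₂ := by
      by_cases nik : Nbr i k
      · rw [cm_nbr nik.symm, mul_assoc, mul_assoc] at h
        rw [cm_nbr nik.symm, mul_assoc] at hL
        simp only [len_gen_mul] at hL
        exact H.cancel (by omega) (H.cancel (by simp only [len_gen_mul]; omega) h)
      · rw [cm_far (Ne.symm hik) (sym nik)] at h hL
        simp only [len_gen_mul] at hL
        exact H.cancel (by omega) h
    subst this
    exact ⟨cm i k * Z₁, by simp [cm_self]⟩
  by_cases nik : Nbr i k <;> by_cases njk : Nbr j k <;> by_cases nij : Nbr i j
  · -- The graph on the generators is a path, so it contains no triangle.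
    unfold Nbr at nik njk nij
    omega
  · rw [cm_nbr nik.symm, mul_assoc] at h hL
    rw [cm_nbr njk.symm, mul_assoc] at h
    rw [cm_nbr nik, cm_nbr njk, cm_far hij nij, cm_far (Ne.symm hij) (sym nij), mul_assoc,
      mul_assoc]
    exact trans_nbr_mid H hij nij nik njk h hL
  · rw [cm_nbr nik.symm, mul_assoc] at h hL
    rw [cm_far (Ne.symm hjk) (sym njk)] at h
    rw [cm_nbr nik, cm_far hjk njk, cm_nbr nij, cm_nbr nij.symm]
    simp only [mul_assoc]
    exact trans_nbr_end H hjk nij nik njk h hL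
  · rw [cm_nbr nik.symm, mul_assoc] at h hL
    rw [cm_far (Ne.symm hjk) (sym njk)] at h
    rw [cm_nbr nik, cm_far hjk njk, cm_far hij nij, cm_far (Ne.symm hij) (sym nij), mul_assoc]
    exact trans_one_nbr H hij hjk nij nik njk h hL
  · rw [cm_nbr njk.symm, mul_assoc] at h hL'
    rw [cm_far (Ne.symm hik) (sym nik)] at h
    rw [cm_nbr njk, cm_far hik nik, cm_nbr nij, cm_nbr nij.symm]
    simp only [mul_assoc]
    obtain ⟨Z, h1, h2⟩ := trans_nbr_end H hik nij.symm njk nik h.symm hL'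
    exact ⟨Z, h2, h1⟩
  · rw [cm_nbr njk.symm, mul_assoc] at h hL'
    rw [cm_far (Ne.symm hik) (sym nik)] at h
    rw [cm_nbr njk, cm_far hik nik, cm_far hij nij, cm_far (Ne.symm hij) (sym nij), mul_assoc]
    obtain ⟨Z, h1, h2⟩ := trans_one_nbr H (Ne.symm hij) hik (sym nij) njk nik h.symm hL'
    exact ⟨Z, h2, h1⟩
  · rw [cm_far (Ne.symm hik) (sym nik)] at h hL
    rw [cm_far (Ne.symm hjk) (sym njk)] at h
    simp only [len_gen_mul] at hL
    rw [cm_far hik nik, cm_far hjk njk, cm_nbr nij, cm_nbr nij.symm]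
    obtain ⟨Z, rfl, rfl⟩ := H.nbr nij (by omega) h
    refine ⟨gen k * Z, ?_, ?_⟩
    · rw [mul_assoc, gen_comm (Ne.symm hjk) (sym njk), gen_comm (Ne.symm hik) (sym nik)]
    · rw [mul_assoc, gen_comm (Ne.symm hik) (sym nik), gen_comm (Ne.symm hjk) (sym njk)]
  · rw [cm_far (Ne.symm hik) (sym nik)] at h hL
    rw [cm_far (Ne.symm hjk) (sym njk)] at h
    simp only [len_gen_mul] at hL
    rw [cm_far hik nik, cm_far hjk njk, cm_far hij nij, cm_far (Ne.symm hij) (sym nij)]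
    obtain ⟨Z, rfl, rfl⟩ := H.far hij nij (by omega) h
    exact ⟨gen k * Z, gen_comm (Ne.symm hjk) (sym njk) _, gen_comm (Ne.symm hik) (sym nik) _⟩

lemma of_mul_inj {i j : Fin n} {a b : FreeMonoid (Fin n)}
    (h : FreeMonoid.of i * a = FreeMonoid.of j * b) : i = j ∧ a = b :=
  List.cons_eq_cons.1 h

/-- Garside's lemma for congruent words, by induction on the derivation of the congruence. -/
lemma garside_words {L : ℕ} (H : GarsideBelow n L) {u v : FreeMonoid (Fin n)}
    (h : ConGen.Rel (posRel n) u v) : u.length ≤ L + 1 →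
    ∀ (i j : Fin n) (a b : FreeMonoid (Fin n)), u = FreeMonoid.of i * a →
      v = FreeMonoid.of j * b →
      ∃ z, PresentedMonoid.mk (posRel n) a = cm i j * z ∧
        PresentedMonoid.mk (posRel n) b = cm j i * z := by
  induction h with
  | of x y h =>
    rintro - i j a b rfl rfl
    obtain ⟨k, l, h1, h2⟩ := h
    obtain ⟨rfl, rfl⟩ := of_mul_inj h1
    obtain ⟨rfl, rfl⟩ := of_mul_inj h2
    exact ⟨1, (mul_one _).symm, (mul_one _).symm⟩
  | refl x =>
    rintro - i j a b rfl h2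
    obtain ⟨rfl, rfl⟩ := of_mul_inj h2
    exact ⟨_, by rw [cm_self, one_mul], by rw [cm_self, one_mul]⟩
  | symm h ih =>
    intro hL i j a b h1 h2
    obtain ⟨z, h3, h4⟩ := ih ((length_eq_of_rel h).trans_le hL) j i b a h2 h1
    exact ⟨z, h4, h3⟩
  | @trans x y w hxy hyw ih1 ih2 =>
    intro hL i j a b h1 h2
    have hlen := length_eq_of_rel hxy
    cases y using FreeMonoid.casesOn with
    | one => subst h1; simp at hlen
    | of_mul k c =>
      obtain ⟨Z₁, e1, e2⟩ := ih1 hL i k a c h1 rfl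
      obtain ⟨Z₂, e3, e4⟩ := ih2 (hlen ▸ hL) k j c b rfl h2
      have hc : c.length ≤ L := by
        rw [hlen, FreeMonoid.length_mul, FreeMonoid.length_of] at hL; omega
      rw [e1, e4]
      exact compl_trans H i j k Z₁ Z₂ (e2 ▸ e3) (by rw [← e2, len_mk]; exact hc)
  | @mul w x y z hwx hyz ih1 ih2 =>
    intro hL i j a b h1 h2
    have hlen := length_eq_of_rel hwx
    rw [FreeMonoid.length_mul] at hL
    cases w using FreeMonoid.casesOn with
    | one =>
      rw [FreeMonoid.length_one, eq_comm, FreeMonoid.length_eq_zero] at hlen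
      subst hlen
      rw [one_mul] at h1 h2
      exact ih2 (by omega) i j a b h1 h2
    | of_mul k c =>
      cases x using FreeMonoid.casesOn with
      | one => simp at hlen
      | of_mul l d =>
        rw [mul_assoc] at h1 h2
        obtain ⟨rfl, rfl⟩ := of_mul_inj h1
        obtain ⟨rfl, rfl⟩ := of_mul_inj h2
        obtain ⟨Z, e1, e2⟩ := ih1 (by omega) k l c d rfl rfl
        refine ⟨Z * PresentedMonoid.mk (posRel n) y, ?_, ?_⟩
        · change PresentedMonoid.mk (posRel n) (c * y) = _
          rw [map_mul, e1, mul_assoc]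
        · change PresentedMonoid.mk (posRel n) (d * z) = _
          rw [map_mul, e2, mul_assoc, PresentedMonoid.mk_eq_mk_iff.2 hyz]

/-- Garside's lemma in the presented monoid. -/
theorem garside_monoid (i j : Fin n) (x y : BraidMonoid n) (h : gen i * x = gen j * y) :
    ∃ z, x = cm i j * z ∧ y = cm j i * z := by
  have key : ∀ L, GarsideBelow n L := by
    intro L
    induction L with
    | zero => intro i j x y hx; omega
    | succ L ih =>
      intro i j x y hx h
      obtain ⟨a, rfl⟩ := PresentedMonoid.surjective_mk x
      obtain ⟨b, rfl⟩ := PresentedMonoid.surjective_mk y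
      rw [len_mk] at hx
      refine garside_words ih (PresentedMonoid.mk_eq_mk_iff.1
        (?_ : PresentedMonoid.mk (posRel n) (FreeMonoid.of i * a) =
          PresentedMonoid.mk (posRel n) (FreeMonoid.of j * b))) ?_ i j a b rfl rfl
      · rw [map_mul, map_mul]; exact h
      · rw [FreeMonoid.length_mul, FreeMonoid.length_of]; omega
  exact key (len x + 1) i j x y (Nat.lt_succ_self _) h

lemma gen_cancel {i : Fin n} {x y : BraidMonoid n} (h : gen i * x = gen i * y) : x = y := by
  obtain ⟨z, rfl, rfl⟩ := garside_monoid i i x y h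
  rfl

lemma mul_cancel_left (a x y : BraidMonoid n) (h : a * x = a * y) : x = y := by
  obtain ⟨w, rfl⟩ := PresentedMonoid.surjective_mk a
  induction w using FreeMonoid.inductionOn' with
  | one => simpa using h
  | of_mul i w ih =>
    rw [map_mul, mul_assoc, mul_assoc] at h
    exact ih (gen_cancel h)

/-! ### The half twist -/

section Delta

variable {M : Type*} [Monoid M]

/-- The ascending product `s 0 * s 1 * ⋯ * s (m - 1)`. -/
def asc (s : ℕ → M) : ℕ → M
  | 0 => 1
  | m + 1 => asc s m * s m

/-- The descending product `s (m - 1) * ⋯ * s 1 * s 0`. -/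
def desc (s : ℕ → M) : ℕ → M
  | 0 => 1
  | m + 1 => s m * desc s m

/-- The half twist on the generators `s 0, …, s (m - 1)`. -/
def delta (s : ℕ → M) : ℕ → M
  | 0 => 1
  | m + 1 => asc s (m + 1) * delta s m

/-- The elements `s 0, …, s (N - 1)` satisfy the braid relations. -/
structure BraidSeq (s : ℕ → M) (N : ℕ) : Prop where
  comm : ∀ i j, i + 1 < j → j < N → s i * s j = s j * s i
  braid : ∀ i, i + 1 < N → s i * s (i + 1) * s i = s (i + 1) * s i * s (i + 1)

variable {s : ℕ → M} {N : ℕ}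

lemma asc_comm (H : BraidSeq s N) {m j : ℕ} (hm : m < j) (hj : j < N) :
    asc s m * s j = s j * asc s m := by
  induction m with
  | zero => simp [asc]
  | succ m ih =>
    rw [asc, mul_assoc, H.comm m j hm hj, ← mul_assoc, ih (by omega), mul_assoc]

lemma desc_comm (H : BraidSeq s N) {m j : ℕ} (hm : m < j) (hj : j < N) :
    desc s m * s j = s j * desc s m := by
  induction m with
  | zero => simp [desc]
  | succ m ih =>
    rw [desc, mul_assoc, ih (by omega), ← mul_assoc, H.comm m j hm hj, mul_assoc]

lemma delta_comm (H : BraidSeq s N) {m j : ℕ} (hm : m < j) (hj : j < N) :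
    delta s m * s j = s j * delta s m := by
  induction m with
  | zero => simp [delta]
  | succ m ih =>
    rw [delta, mul_assoc, ih (by omega), ← mul_assoc, asc_comm H hm hj, mul_assoc]

lemma asc_shift (H : BraidSeq s N) {m i : ℕ} (hi : i + 1 < m) (hm : m ≤ N) :
    asc s m * s i = s (i + 1) * asc s m := by
  induction m with
  | zero => omega
  | succ m ih =>
    rcases Nat.lt_or_ge (i + 1) m with h | h
    · rw [asc, mul_assoc, ← H.comm i m h (by omega), ← mul_assoc, ih h (by omega), mul_assoc]
    · obtain rfl : m = i + 1 := by omega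
      calc asc s i * s i * s (i + 1) * s i
          = asc s i * (s i * s (i + 1) * s i) := by simp only [mul_assoc]
        _ = asc s i * s (i + 1) * (s i * s (i + 1)) := by
            rw [H.braid i (by omega)]; simp only [mul_assoc]
        _ = s (i + 1) * (asc s i * s i * s (i + 1)) := by
            rw [asc_comm H (by omega) (by omega)]; simp only [mul_assoc]

lemma desc_shift (H : BraidSeq s N) {m i : ℕ} (hi : i + 1 < m) (hm : m ≤ N) :
    s i * desc s m = desc s m * s (i + 1) := by
  induction m with
  | zero => omega
  | succ m ih =>
    rcases Nat.lt_or_ge (i + 1) m with h | h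
    · rw [desc, ← mul_assoc, H.comm i m h (by omega), mul_assoc, ih h (by omega), mul_assoc]
    · obtain rfl : m = i + 1 := by omega
      calc s i * (s (i + 1) * (s i * desc s i))
          = (s i * s (i + 1) * s i) * desc s i := by simp only [mul_assoc]
        _ = s (i + 1) * s i * (s (i + 1) * desc s i) := by
            rw [H.braid i (by omega)]; simp only [mul_assoc]
        _ = s (i + 1) * (s i * desc s i) * s (i + 1) := by
            rw [← desc_comm H (by omega) (by omega)]; simp only [mul_assoc]

/-- The two factorizations of the half twist: peeling off the first strand, or the last one. -/
lemma delta_succ_eq (H : BraidSeq s N) {m : ℕ} (hm : m < N) :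
    delta s (m + 1) = delta s m * desc s (m + 1) := by
  induction m with
  | zero => simp [delta, asc, desc]
  | succ m ih =>
    calc asc s (m + 1) * s (m + 1) * delta s (m + 1)
        = asc s (m + 1) * (s (m + 1) * delta s m) * desc s (m + 1) := by
          rw [ih (by omega)]; simp only [mul_assoc]
      _ = asc s (m + 1) * delta s m * (s (m + 1) * desc s (m + 1)) := by
          rw [← delta_comm H (by omega) hm]; simp only [mul_assoc]

/-- Conjugation by the half twist reverses the order of the generators. -/
lemma delta_conj (H : BraidSeq s N) {m i : ℕ} (hi : i < m) (hm : m ≤ N) :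
    delta s m * s i = s (m - 1 - i) * delta s m := by
  induction m generalizing i with
  | zero => omega
  | succ m ih =>
    rcases Nat.lt_or_ge i m with h | h
    · rw [delta, mul_assoc, ih h (by omega), ← mul_assoc, asc_shift H (by omega) hm, mul_assoc]
      congr 2
      omega
    · obtain rfl : i = m := by omega
      have e : i + 1 - 1 - i = 0 := by omega
      rw [e]
      rcases Nat.eq_zero_or_pos i with rfl | hpos
      · simp [delta, asc]
      · -- Carry `s 0` across `delta s i`, where it becomes `s (i - 1)`, then across `desc`.
        have h1 := ih (i := i - 1) (by omega) (by omega)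
        have e1 : i - 1 - (i - 1) = 0 := by omega
        have h2 := desc_shift H (m := i + 1) (i := i - 1) (by omega) hm
        have e2 : i - 1 + 1 = i := by omega
        rw [e1] at h1
        rw [e2] at h2
        rw [delta_succ_eq H (by omega), mul_assoc, ← h2, ← mul_assoc, h1, mul_assoc]

lemma gen_dvd_delta (H : BraidSeq s N) {m i : ℕ} (hi : i < m) (hm : m ≤ N) :
    ∃ t, delta s m = s i * t := by
  induction m generalizing i with
  | zero => omega
  | succ m ih =>
    cases i with
    | zero =>
      have : ∀ k, ∃ t, asc s (k + 1) = s 0 * t := by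
        intro k
        induction k with
        | zero => exact ⟨1, by simp [asc]⟩
        | succ k ihk =>
          obtain ⟨t, ht⟩ := ihk
          exact ⟨t * s (k + 1), by rw [asc, ht, mul_assoc]⟩
      obtain ⟨t, ht⟩ := this m
      exact ⟨t * delta s m, by rw [delta, ht, mul_assoc]⟩
    | succ i =>
      obtain ⟨t, ht⟩ := ih (i := i) (by omega) (by omega)
      exact ⟨asc s (m + 1) * t, by rw [delta, ht, ← mul_assoc, asc_shift H hi hm, mul_assoc]⟩

end Delta

/-! ### Embedding in the braid group -/

/-- The generators of the presented monoid indexed by `ℕ`, with value `1` out of range. -/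
def genNat (n : ℕ) (i : ℕ) : BraidMonoid n := if h : i < n then gen ⟨i, h⟩ else 1

lemma genNat_val (i : Fin n) : genNat n i.val = gen i := by simp [genNat]

lemma braidSeq_genNat (n : ℕ) : BraidSeq (genNat n) n where
  comm i j hij hj := by
    have hne : (⟨i, by omega⟩ : Fin n) ≠ ⟨j, hj⟩ := by
      intro e; rw [Fin.mk.injEq] at e; omega
    have := gen_comm hne (by unfold Nbr; simp only; omega) 1
    simpa [genNat, hj, show i < n by omega] using this
  braid i hi := by
    have hN : Nbr (⟨i, by omega⟩ : Fin n) ⟨i + 1, hi⟩ := Or.inl rfl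
    have := gen_braid hN 1
    simpa [genNat, hi, show i < n by omega, mul_assoc] using this

/-- The full twist `Δ²`. -/
def fullTwist (n : ℕ) : BraidMonoid n := delta (genNat n) n * delta (genNat n) n

lemma fullTwist_central (x : BraidMonoid n) : Commute (fullTwist n) x := by
  have hgen : ∀ i : Fin n, Commute (fullTwist n) (gen i) := by
    intro i
    have hi := i.isLt
    have h1 := delta_conj (braidSeq_genNat n) hi le_rfl
    have h2 := delta_conj (braidSeq_genNat n) (show n - 1 - i.val < n by omega) le_rfl
    have e : n - 1 - (n - 1 - i.val) = i.val := by omega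
    rw [e] at h2
    rw [← genNat_val, Commute, SemiconjBy, fullTwist, mul_assoc, h1, ← mul_assoc, h2, mul_assoc]
  obtain ⟨w, rfl⟩ := PresentedMonoid.surjective_mk x
  induction w using FreeMonoid.inductionOn' with
  | one => rw [map_one]; exact Commute.one_right _
  | of_mul i w ih => rw [map_mul]; exact (hgen i).mul_right ih

/-- Each generator divides the full twist on both sides, with the same quotient. -/
lemma gen_dvd_fullTwist (i : Fin n) :
    ∃ t, gen i * t = fullTwist n ∧ t * gen i = fullTwist n := by
  obtain ⟨t, ht⟩ := gen_dvd_delta (braidSeq_genNat n) i.isLt le_rfl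
  rw [genNat_val] at ht
  have h1 : gen i * (t * delta (genNat n) n) = fullTwist n := by
    rw [← mul_assoc, ← ht, fullTwist]
  refine ⟨_, h1, gen_cancel (i := i) ?_⟩
  rw [← mul_assoc, h1]
  exact fullTwist_central _

/-- The powers of the full twist form an Ore set since the full twist is central. -/
instance oreSet (n : ℕ) : OreLocalization.OreSet (Submonoid.powers (fullTwist n)) :=
  have hc : ∀ (s : Submonoid.powers (fullTwist n)) (r : BraidMonoid n), s.1 * r = r * s.1 := by
    rintro ⟨_, k, rfl⟩ r
    exact (fullTwist_central r).pow_left k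
  { ore_right_cancel := fun r₁ r₂ s h => ⟨s, by rw [hc, hc, h]⟩
    oreNum := fun r _ => r
    oreDenom := fun _ s => s
    ore_eq := fun r s => hc s r }

/-- The localization of the presented monoid at the powers of the full twist. -/
abbrev Loc (n : ℕ) : Type := OreLocalization (Submonoid.powers (fullTwist n)) (BraidMonoid n)

/-- The localization map. -/
def toLoc (n : ℕ) : BraidMonoid n →* Loc n := OreLocalization.numeratorHom

lemma toLoc_injective (n : ℕ) : Function.Injective (toLoc n) := by
  intro x y h
  obtain ⟨u, v, h1, h2⟩ := OreLocalization.oreDiv_eq_iff.1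
    (show OreLocalization.oreDiv x (1 : Submonoid.powers (fullTwist n)) =
      OreLocalization.oreDiv y 1 from h)
  simp only [OneMemClass.coe_one, mul_one] at h2
  rw [Submonoid.smul_def, smul_eq_mul, smul_eq_mul, h2] at h1
  exact (mul_cancel_left _ _ _ h1).symm

lemma isUnit_toLoc_gen (i : Fin n) : IsUnit (toLoc n (gen i)) := by
  obtain ⟨t, h1, h2⟩ := gen_dvd_fullTwist i
  have hu : IsUnit (toLoc n (fullTwist n)) :=
    OreLocalization.numerator_isUnit (⟨fullTwist n, Submonoid.mem_powers _⟩ :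
      Submonoid.powers (fullTwist n))
  have hcomm : Commute (toLoc n (gen i)) (toLoc n t) := by
    rw [Commute, SemiconjBy, ← map_mul, ← map_mul, h1, h2]
  have h3 : toLoc n (gen i) * toLoc n t = toLoc n (fullTwist n) := by rw [← map_mul, h1]
  exact (hcomm.isUnit_mul_iff.1 (h3 ▸ hu)).1

/-- The homomorphism from the braid group to the units of the localization. -/
noncomputable def fromGroup (n : ℕ) : BraidGroup n →* (Loc n)ˣ :=
  PresentedGroup.toGroup (f := fun i : Fin n => (isUnit_toLoc_gen i).unit) (by
    rintro r ⟨i, j, ⟨hij, rfl⟩ | ⟨hij, rfl⟩⟩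
    · have hne : i ≠ j := by rintro rfl; omega
      have := gen_comm hne (by unfold Nbr; omega) 1
      rw [map_mul, map_inv, mul_inv_eq_one]
      ext
      simpa using congrArg (toLoc n) this
    · have := gen_braid (show Nbr i j from hij) 1
      rw [map_mul, map_inv, mul_inv_eq_one]
      ext
      simpa [mul_assoc] using congrArg (toLoc n) this)

lemma σgen_comm {i j : Fin n} (h : i.val + 1 < j.val ∨ j.val + 1 < i.val) :
    σgen n i * σgen n j = σgen n j * σgen n i := by
  have : PresentedGroup.mk (braidRels n)
      (FreeGroup.of i * FreeGroup.of j * (FreeGroup.of j * FreeGroup.of i)⁻¹) = 1 :=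
    PresentedGroup.one_of_mem ⟨i, j, Or.inl ⟨h, rfl⟩⟩
  rw [map_mul, map_inv, mul_inv_eq_one, map_mul, map_mul] at this
  exact this

lemma σgen_braid {i j : Fin n} (h : i.val + 1 = j.val ∨ j.val + 1 = i.val) :
    σgen n i * σgen n j * σgen n i = σgen n j * σgen n i * σgen n j := by
  have : PresentedGroup.mk (braidRels n)
      (FreeGroup.of i * FreeGroup.of j * FreeGroup.of i *
        (FreeGroup.of j * FreeGroup.of i * FreeGroup.of j)⁻¹) = 1 :=
    PresentedGroup.one_of_mem ⟨i, j, Or.inr ⟨h, rfl⟩⟩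
  rw [map_mul, map_inv, mul_inv_eq_one, map_mul, map_mul, map_mul, map_mul] at this
  exact this

/-- The canonical homomorphism from the presented monoid to the braid group. -/
def toBraidGroup (n : ℕ) : BraidMonoid n →* BraidGroup n :=
  PresentedMonoid.lift (σgen n) (by
    rintro _ _ ⟨i, j, rfl, rfl⟩
    by_cases hij : i = j
    · subst hij; rfl
    · by_cases hN : Nbr i j
      · simpa [compl, hij, Ne.symm hij, hN, hN.symm, mul_assoc] using σgen_braid hN
      · have hN' : ¬ Nbr j i := fun e => hN e.symm
        have : i.val ≠ j.val := fun e => hij (Fin.ext e)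
        simpa [compl, hij, Ne.symm hij, hN, hN'] using
          σgen_comm (i := i) (j := j) (by unfold Nbr at hN; omega))

lemma toBraidGroup_gen (i : Fin n) : toBraidGroup n (gen i) = σgen n i := rfl

/-- The presented braid monoid embeds in the braid group. -/
theorem toBraidGroup_injective (n : ℕ) : Function.Injective (toBraidGroup n) := by
  have hcomp : ((Units.coeHom (Loc n)).comp (fromGroup n)).comp (toBraidGroup n) = toLoc n := by
    apply PresentedMonoid.ext
    intro i
    change ((fromGroup n (σgen n i) : (Loc n)ˣ) : Loc n) = toLoc n (gen i)
    rw [fromGroup, σgen, PresentedGroup.toGroup.of, IsUnit.unit_spec]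
  intro x y h
  apply toLoc_injective n
  rw [← hcomp]
  simp [h]

lemma mem_braidPos_iff {X : BraidGroup n} : X ∈ braidPos n ↔ ∃ x, toBraidGroup n x = X := by
  have : braidPos n = MonoidHom.mrange (toBraidGroup n) := by
    rw [MonoidHom.mrange_eq_map, ← PresentedMonoid.closure_range_of, MonoidHom.map_mclosure,
      ← Set.range_comp]
    rfl
  rw [this, MonoidHom.mem_mrange]

end GarsideLemma

/-- Garside's Lemma 0: if `σ_i X = σ_j Y` for positive braids `X`, `Y`, then:
if `i = j` then `X = Y`; if `|i - j| = 1` there is a positive `Z` with `X = σ_j σ_i Z` and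
`Y = σ_i σ_j Z`; if `|i - j| ≥ 2` there is a positive `Z` with `X = σ_j Z` and `Y = σ_i Z`. -/
theorem statement14 (n : ℕ) (X Y : BraidGroup n)
    (hX : X ∈ braidPos n) (hY : Y ∈ braidPos n) (i j : Fin n)
    (h : σgen n i * X = σgen n j * Y) :
    (i = j → X = Y) ∧
    ((i.val + 1 = j.val ∨ j.val + 1 = i.val) →
      ∃ Z ∈ braidPos n, X = σgen n j * σgen n i * Z ∧ Y = σgen n i * σgen n j * Z) ∧
    ((i.val + 2 ≤ j.val ∨ j.val + 2 ≤ i.val) →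
      ∃ Z ∈ braidPos n, X = σgen n j * Z ∧ Y = σgen n i * Z) := by
  open GarsideLemma in
  obtain ⟨x, rfl⟩ := mem_braidPos_iff.1 hX
  obtain ⟨y, rfl⟩ := mem_braidPos_iff.1 hY
  rw [← toBraidGroup_gen, ← toBraidGroup_gen, ← map_mul, ← map_mul] at h
  obtain ⟨z, rfl, rfl⟩ := garside_monoid i j x y (toBraidGroup_injective n h)
  refine ⟨?_, fun hN => ?_, fun hF => ?_⟩
  · rintro rfl; rfl
  · have hN : Nbr i j := hN
    refine ⟨toBraidGroup n z, mem_braidPos_iff.2 ⟨z, rfl⟩, ?_, ?_⟩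
    · rw [cm_nbr hN, map_mul, map_mul, toBraidGroup_gen, toBraidGroup_gen]
    · rw [cm_nbr hN.symm, map_mul, map_mul, toBraidGroup_gen, toBraidGroup_gen]
  · have hne : i ≠ j := by rintro rfl; omega
    refine ⟨toBraidGroup n z, mem_braidPos_iff.2 ⟨z, rfl⟩, ?_, ?_⟩
    · rw [cm_far hne (by unfold Nbr; omega), map_mul, toBraidGroup_gen]
    · rw [cm_far hne.symm (by unfold Nbr; omega), map_mul, toBraidGroup_gen]
end

section
/- (Δ divisibility is two-sided) Let b ∈ B_{n+1}^+ be a positive braid and let Δ be the Garside element of B_{n+1}. Then Δ left-divides b in B_{n+1}^+ if and only if Δ right-divides b in B_{n+1}^+. -/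
section Monoid

variable {M : Type*} [Monoid M]

/-- The ascending product `s 0 * s 1 * ⋯ * s (k - 1)`. -/
def ascProd (s : ℕ → M) : ℕ → M
  | 0 => 1
  | k + 1 => ascProd s k * s k

/-- The descending product `s (k - 1) * ⋯ * s 1 * s 0`. -/
def descProd (s : ℕ → M) : ℕ → M
  | 0 => 1
  | k + 1 => s k * descProd s k

/-- The Garside element of the first `k` generators `s 0, …, s (k - 1)`. -/
def deltaProd (s : ℕ → M) : ℕ → M
  | 0 => 1
  | k + 1 => ascProd s (k + 1) * deltaProd s k

variable {s : ℕ → M} {n : ℕ}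

theorem commute_ascProd (hc : ∀ i j, i + 1 < j → j < n → Commute (s i) (s j)) {j : ℕ}
    (hj : j < n) : ∀ {k : ℕ}, k < j → Commute (ascProd s k) (s j)
  | 0, _ => Commute.one_left _
  | k + 1, hk => (commute_ascProd hc hj (by omega)).mul_left (hc k j hk hj)

theorem commute_descProd (hc : ∀ i j, i + 1 < j → j < n → Commute (s i) (s j)) {j : ℕ}
    (hj : j < n) : ∀ {k : ℕ}, k < j → Commute (descProd s k) (s j)
  | 0, _ => Commute.one_left _
  | k + 1, hk => (hc k j hk hj).mul_left (commute_descProd hc hj (by omega))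

theorem commute_deltaProd (hc : ∀ i j, i + 1 < j → j < n → Commute (s i) (s j)) {j : ℕ}
    (hj : j < n) : ∀ {k : ℕ}, k < j → Commute (deltaProd s k) (s j)
  | 0, _ => Commute.one_left _
  | _ + 1, hk => (commute_ascProd hc hj hk).mul_left (commute_deltaProd hc hj (by omega))

theorem ascProd_mul (hc : ∀ i j, i + 1 < j → j < n → Commute (s i) (s j))
    (hb : ∀ i, i + 1 < n → s i * s (i + 1) * s i = s (i + 1) * s i * s (i + 1)) (i : ℕ) :
    ∀ k, i + 1 < k → k ≤ n → ascProd s k * s i = s (i + 1) * ascProd s k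
  | 0, h, _ => by omega
  | k + 1, h, hk => by
    rcases Nat.lt_or_ge (i + 1) k with h' | h'
    · calc ascProd s k * s k * s i = ascProd s k * s i * s k := by
            rw [mul_assoc, ← (hc i k h' (by omega)).eq, mul_assoc]
        _ = s (i + 1) * (ascProd s k * s k) := by
            rw [ascProd_mul hc hb i k h' (by omega), mul_assoc]
    · obtain rfl : k = i + 1 := by omega
      calc ascProd s i * s i * s (i + 1) * s i
          = ascProd s i * (s i * s (i + 1) * s i) := by simp only [mul_assoc]
        _ = ascProd s i * s (i + 1) * (s i * s (i + 1)) := by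
            rw [hb i (by omega)]; simp only [mul_assoc]
        _ = s (i + 1) * (ascProd s i * s i * s (i + 1)) := by
            rw [(commute_ascProd hc (j := i + 1) (by omega) (by omega)).eq]
            simp only [mul_assoc]

theorem descProd_mul_last (hc : ∀ i j, i + 1 < j → j < n → Commute (s i) (s j))
    (hb : ∀ i, i + 1 < n → s i * s (i + 1) * s i = s (i + 1) * s i * s (i + 1)) (k : ℕ)
    (hk : k + 1 < n) : descProd s (k + 2) * s (k + 1) = s k * descProd s (k + 2) := by
  calc s (k + 1) * (s k * descProd s k) * s (k + 1)
      = s (k + 1) * s k * (descProd s k * s (k + 1)) := by simp only [mul_assoc]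
    _ = (s (k + 1) * s k * s (k + 1)) * descProd s k := by
        rw [(commute_descProd hc hk (by omega)).eq]; simp only [mul_assoc]
    _ = s k * (s (k + 1) * (s k * descProd s k)) := by
        rw [← hb k hk]; simp only [mul_assoc]

theorem deltaProd_succ' (hc : ∀ i j, i + 1 < j → j < n → Commute (s i) (s j)) :
    ∀ k, k < n → deltaProd s (k + 1) = deltaProd s k * descProd s (k + 1)
  | 0, _ => by simp [deltaProd, ascProd, descProd]
  | k + 1, hk => by
    calc ascProd s (k + 1) * s (k + 1) * deltaProd s (k + 1)
        = ascProd s (k + 1) * (s (k + 1) * deltaProd s k) * descProd s (k + 1) := by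
          rw [deltaProd_succ' hc k (by omega)]; simp only [mul_assoc]
      _ = ascProd s (k + 1) * deltaProd s k * (s (k + 1) * descProd s (k + 1)) := by
          rw [← (commute_deltaProd hc hk (by omega)).eq]; simp only [mul_assoc]

/-- The Garside element reverses the order of the generators. -/
theorem deltaProd_mul (hc : ∀ i j, i + 1 < j → j < n → Commute (s i) (s j))
    (hb : ∀ i, i + 1 < n → s i * s (i + 1) * s i = s (i + 1) * s i * s (i + 1)) :
    ∀ k i, i < k → k ≤ n → deltaProd s k * s i = s (k - 1 - i) * deltaProd s k
  | 0, _, h, _ => by omega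
  | 1, i, h, _ => by
    obtain rfl : i = 0 := by omega
    simp [deltaProd, ascProd]
  | k + 2, i, h, hk => by
    rcases Nat.lt_or_ge i (k + 1) with h' | h'
    · have e : k + 2 - 1 - i = (k + 1 - 1 - i) + 1 := by omega
      calc ascProd s (k + 2) * deltaProd s (k + 1) * s i
          = ascProd s (k + 2) * s (k + 1 - 1 - i) * deltaProd s (k + 1) := by
            rw [mul_assoc, deltaProd_mul hc hb (k + 1) i h' (by omega), mul_assoc]
        _ = s (k + 2 - 1 - i) * (ascProd s (k + 2) * deltaProd s (k + 1)) := by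
            rw [ascProd_mul hc hb _ (k + 2) (by omega) hk, e, mul_assoc]
    · obtain rfl : i = k + 1 := by omega
      have e : k + 2 - 1 - (k + 1) = k + 1 - 1 - k := by omega
      rw [deltaProd_succ' hc (k + 1) (by omega), mul_assoc,
        descProd_mul_last hc hb k (by omega), ← mul_assoc,
        deltaProd_mul hc hb (k + 1) k (by omega) (by omega), e, mul_assoc]

theorem ascProd_eq (s : ℕ → M) (k : ℕ) : ascProd s k = ((List.range k).map s).prod := by
  induction k with
  | zero => rfl
  | succ k ih => simp [ascProd, List.range_succ, ih]

theorem deltaProd_eq (s : ℕ → M) (k : ℕ) :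
    deltaProd s k = ((List.range k).reverse.map fun m => ascProd s (m + 1)).prod := by
  induction k with
  | zero => rfl
  | succ k ih => simp [deltaProd, List.range_succ, ih]

end Monoid

theorem filter_le_range {m n : ℕ} (h : m < n) :
    (List.range n).filter (fun i => i ≤ m) = List.range (m + 1) := by
  obtain ⟨d, rfl⟩ := Nat.exists_eq_add_of_le (Nat.succ_le_of_lt h)
  rw [List.range_add, List.filter_append, List.filter_eq_self.2, List.filter_eq_nil_iff.2]
  · simp
  · simp only [List.mem_map, decide_eq_true_eq]
    rintro _ ⟨a, -, rfl⟩
    omega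
  · simp only [List.mem_range, decide_eq_true_eq]
    omega

/-- The braid generators as a sequence indexed by `ℕ`, extended by `1` beyond the last one. -/
def σseq (n : ℕ) (i : ℕ) : BraidGroup n := if h : i < n then σgen n ⟨i, h⟩ else 1

theorem σseq_val (n : ℕ) (i : Fin n) : σseq n i = σgen n i := by simp [σseq]

theorem braidDelta_eq (n : ℕ) : braidDelta n = deltaProd (σseq n) n := by
  rw [deltaProd_eq, braidDelta, ← List.map_coe_finRange_eq_range, ← List.map_reverse, List.map_map]
  congr 1
  refine List.map_congr_left fun m _ => ?_
  have h : σgen n = σseq n ∘ Fin.val := funext fun i => (σseq_val n i).symm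
  rw [Function.comp_apply, ascProd_eq, ← filter_le_range m.2, ← List.map_coe_finRange_eq_range,
    List.filter_map, List.map_map, h]
  rfl

theorem σseq_commute (n i j : ℕ) (hij : i + 1 < j) (hj : j < n) :
    Commute (σseq n i) (σseq n j) := by
  have hi : i < n := by omega
  rw [σseq, σseq, dif_pos hi, dif_pos hj]
  refine mul_inv_eq_one.1 ?_
  exact PresentedGroup.one_of_mem (rels := braidRels n)
    ⟨⟨i, hi⟩, ⟨j, hj⟩, Or.inl ⟨Or.inl hij, rfl⟩⟩

theorem σseq_braid (n i : ℕ) (h : i + 1 < n) :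
    σseq n i * σseq n (i + 1) * σseq n i = σseq n (i + 1) * σseq n i * σseq n (i + 1) := by
  have hi : i < n := by omega
  rw [σseq, σseq, dif_pos hi, dif_pos h]
  refine mul_inv_eq_one.1 ?_
  exact PresentedGroup.one_of_mem (rels := braidRels n)
    ⟨⟨i, hi⟩, ⟨i + 1, h⟩, Or.inr ⟨Or.inl rfl, rfl⟩⟩

theorem braidDelta_mul_σgen (n : ℕ) (i : Fin n) :
    braidDelta n * σgen n i = σgen n i.rev * braidDelta n := by
  have h := deltaProd_mul (σseq_commute n) (σseq_braid n) n i i.2 le_rfl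
  have e : n - 1 - (i : ℕ) = (i.rev : Fin n) := by rw [Fin.val_rev]; omega
  rwa [e, σseq_val, σseq_val, ← braidDelta_eq] at h

theorem exists_braidDelta_mul {n : ℕ} {c : BraidGroup n} (hc : c ∈ braidPos n) :
    ∃ d ∈ braidPos n, braidDelta n * c = d * braidDelta n := by
  induction hc using Submonoid.closure_induction with
  | mem x hx =>
    obtain ⟨i, rfl⟩ := hx
    exact ⟨_, Submonoid.subset_closure ⟨i.rev, rfl⟩, braidDelta_mul_σgen n i⟩
  | one => exact ⟨1, one_mem _, by simp⟩
  | mul x y _ _ hx hy =>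
    obtain ⟨x', hx', ex⟩ := hx
    obtain ⟨y', hy', ey⟩ := hy
    exact ⟨x' * y', mul_mem hx' hy', by rw [← mul_assoc, ex, mul_assoc, ey, mul_assoc]⟩

theorem exists_mul_braidDelta {n : ℕ} {c : BraidGroup n} (hc : c ∈ braidPos n) :
    ∃ d ∈ braidPos n, c * braidDelta n = braidDelta n * d := by
  induction hc using Submonoid.closure_induction with
  | mem x hx =>
    obtain ⟨i, rfl⟩ := hx
    exact ⟨_, Submonoid.subset_closure ⟨i.rev, rfl⟩, by rw [braidDelta_mul_σgen, Fin.rev_rev]⟩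
  | one => exact ⟨1, one_mem _, by simp⟩
  | mul x y _ _ hx hy =>
    obtain ⟨x', hx', ex⟩ := hx
    obtain ⟨y', hy', ey⟩ := hy
    exact ⟨x' * y', mul_mem hx' hy', by rw [mul_assoc, ey, ← mul_assoc, ex, mul_assoc]⟩

/-- Δ divisibility is two-sided: a positive braid `b` is left-divisible by `Δ`
in `B⁺` if and only if it is right-divisible by `Δ` in `B⁺`. -/
theorem statement16 (n : ℕ) (b : BraidGroup n) (hb : b ∈ braidPos n) :
    LDvd (braidDelta n) b ↔ RDvd (braidDelta n) b := by
  constructor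
  · rintro ⟨c, hc, rfl⟩
    exact exists_braidDelta_mul hc
  · rintro ⟨c, hc, rfl⟩
    exact exists_mul_braidDelta hc
end
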